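/- Vanishing of the bottom of the energy form in the massless case (claim 2 of Subsection 1.3): Let a : ℝ³ → Sym(3,ℝ) be measurable with C₀‖ξ‖² ≤ ξ·a(x)ξ ≤ C₁‖ξ‖² for all x, ξ and some 0 < C₀ ≤ C₁; let c : ℝ³ → ℝ be C¹ with C₀ ≤ c(x) ≤ C₁ and bounded gradient; let m : ℝ³ → ℝ be bounded measurable with m(x) → 0 as ‖x‖ → ∞. Then for every ε > 0 there exists a smooth compactly supported f : ℝ³ → ℝ with ∫ f² dx = 1 such that ∫_{ℝ³} ⟨∇(f/c)(x), a(x)∇(f/c)(x)⟩ + m(x)² f(x)² dx < ε. -/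

import Mathlib

open MeasureTheory Filter

/-- The quadratic form `ξ ↦ ξ · M(x) ξ` associated to a matrix-valued function. -/
def qform (M : EuclideanSpace ℝ (Fin 3) → Matrix (Fin 3) (Fin 3) ℝ)
    (x ξ : EuclideanSpace ℝ (Fin 3)) : ℝ :=
  ∑ i, ∑ j, ξ i * M x i j * ξ j

/-!
Smooth cutoffs equal to `1` on a ball of radius `R` and supported in the concentric ball of radius
`2R` have gradient `O(1/R)`. Centre one, `ψ`, so far away that `|m|` is small on its support and
aim for `f = c ψ`, whose transform `f / c = ψ` has small gradient. Relative to `∫ f²`, the mass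
term is at most `sup m²` over the support and the gradient term is `O(1/R²)`, since the volumes of
the two balls are comparable.

The product `c ψ` is only `C¹`, so it is mollified: on a compact set, `C¹`-closeness of `f` to
`c ψ` gives `C¹`-closeness of `f / c` to `ψ`. This inflates the support slightly, hence the
radius `3R` below.
-/

open Metric Function
open scoped ContDiff InnerProductSpace Convolution

section SmoothApproximation

variable {E F : Type*} [NormedAddCommGroup E] [NormedSpace ℝ E] [NormedAddCommGroup F]
  [NormedSpace ℝ F]

theorem exists_contDiff_dist_le_dist_fderiv_le [FiniteDimensional ℝ E] [CompleteSpace F]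
    {g : E → F} {δ : ℝ} (hgs : HasCompactSupport g) (hg : ContDiff ℝ 1 g) (hδ : 0 < δ) :
    ∃ f : E → F, ContDiff ℝ ∞ f ∧ support f ⊆ thickening δ (support g) ∧
      ∀ x, dist (f x) (g x) ≤ δ ∧ dist (fderiv ℝ f x) (fderiv ℝ g x) ≤ δ := by
  borelize E
  let μ : Measure E := Measure.addHaar
  have hg' : Continuous (fderiv ℝ g) := hg.continuous_fderiv one_ne_zero
  obtain ⟨d, hd, hgd⟩ := Metric.uniformContinuous_iff.1
    ((hgs.uniformContinuous_of_continuous hg.continuous).prodMk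
      ((hgs.fderiv ℝ).uniformContinuous_of_continuous hg')) δ hδ
  have hr : 0 < min d δ := lt_min hd hδ
  let φ : ContDiffBump (0 : E) := ⟨min d δ / 2, min d δ, half_pos hr, half_lt_self hr⟩
  have near {x y : E} (hy : y ∈ ball x φ.rOut) :
      dist (g y) (g x) ≤ δ ∧ dist (fderiv ℝ g y) (fderiv ℝ g x) ≤ δ :=
    max_le_iff.1 (hgd (hy.trans_le (min_le_left _ _))).le
  have precompR_lsmul : (ContinuousLinearMap.lsmul ℝ ℝ : ℝ →L[ℝ] F →L[ℝ] F).precompR E =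
      (ContinuousLinearMap.lsmul ℝ ℝ : ℝ →L[ℝ] (E →L[ℝ] F) →L[ℝ] (E →L[ℝ] F)) := by
    ext; simp
  refine ⟨φ.normed μ ⋆[ContinuousLinearMap.lsmul ℝ ℝ, μ] g,
    φ.hasCompactSupport_normed.contDiff_convolution_left _ φ.contDiff_normed
      hg.continuous.locallyIntegrable, ?_, fun x => ⟨?_, ?_⟩⟩
  · refine (support_convolution_subset _).trans ?_
    rw [φ.support_normed_eq, ball_add_zero]
    exact thickening_mono (min_le_right _ _) _
  · exact φ.dist_normed_convolution_le hg.continuous.aestronglyMeasurable fun y hy => (near hy).1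
  · rw [(hgs.hasFDerivAt_convolution_right _ φ.continuous_normed.locallyIntegrable hg x).fderiv,
      precompR_lsmul]
    exact φ.dist_normed_convolution_le hg'.aestronglyMeasurable fun y hy => (near hy).2

theorem norm_fderiv_smul_le {w : E → ℝ} {h : E → F} {x : E} (hw : DifferentiableAt ℝ w x)
    (hh : DifferentiableAt ℝ h x) :
    ‖fderiv ℝ (fun y => w y • h y) x‖ ≤ ‖w x‖ * ‖fderiv ℝ h x‖ + ‖fderiv ℝ w x‖ * ‖h x‖ := by
  rw [fderiv_fun_smul hw hh, ← norm_smul, ← ContinuousLinearMap.norm_smulRight_apply]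
  exact norm_add_le _ _

theorem norm_smul_le_and_norm_fderiv_smul_le {w : E → ℝ} {h : E → F} {B η : ℝ} (hB₀ : 0 ≤ B)
    (hw : Differentiable ℝ w) (hh : Differentiable ℝ h)
    (hB : ∀ x ∈ tsupport h, ‖w x‖ + ‖fderiv ℝ w x‖ ≤ B)
    (hη : ∀ x, ‖h x‖ ≤ η ∧ ‖fderiv ℝ h x‖ ≤ η) (x : E) :
    ‖w x • h x‖ ≤ B * η ∧ ‖fderiv ℝ (fun y => w y • h y) x‖ ≤ B * η := by
  obtain ⟨hη₀, hη₁⟩ := hη x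
  have hη_nonneg : 0 ≤ η := (norm_nonneg _).trans hη₀
  have hsmul := norm_fderiv_smul_le (hw x) (hh x)
  by_cases hx : x ∈ tsupport h
  · have hBη : (‖w x‖ + ‖fderiv ℝ w x‖) * η ≤ B * η := by gcongr; exact hB x hx
    constructor
    · calc ‖w x • h x‖ ≤ (‖w x‖ + ‖fderiv ℝ w x‖) * η := by
            rw [norm_smul]; gcongr; exact le_add_of_nonneg_right (norm_nonneg _)
        _ ≤ B * η := hBη
    · calc ‖fderiv ℝ (fun y => w y • h y) x‖
          ≤ ‖w x‖ * ‖fderiv ℝ h x‖ + ‖fderiv ℝ w x‖ * ‖h x‖ := hsmul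
        _ ≤ (‖w x‖ + ‖fderiv ℝ w x‖) * η := by rw [add_mul]; gcongr
        _ ≤ B * η := hBη
  · have h0 : h x = 0 := image_eq_zero_of_notMem_tsupport hx
    have h1 : fderiv ℝ h x = 0 := notMem_support.1 fun h1 => hx (support_fderiv_subset ℝ h1)
    simp only [h0, h1, norm_zero, mul_zero, add_zero, smul_zero] at hsmul ⊢
    exact ⟨by positivity, hsmul.trans (by positivity)⟩

theorem exists_contDiff_norm_smul_sub_le [FiniteDimensional ℝ E] [CompleteSpace F]
    {w : E → ℝ} {g : E → F} {δ : ℝ} (hw : ContDiff ℝ 1 w) (hgs : HasCompactSupport g)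
    (hg : ContDiff ℝ 1 g) (hδ : 0 < δ) :
    ∃ f : E → F, ContDiff ℝ ∞ f ∧ support f ⊆ thickening δ (support g) ∧
      ∀ x, ‖w x • (f x - g x)‖ ≤ δ ∧ ‖fderiv ℝ (fun y => w y • (f y - g y)) x‖ ≤ δ := by
  set K := cthickening δ (tsupport g)
  obtain ⟨B, hB⟩ := (IsCompact.cthickening hgs : IsCompact K).exists_bound_of_continuousOn
    (hw.continuous.norm.add (hw.continuous_fderiv one_ne_zero).norm).continuousOn
  obtain ⟨η, hη, hBη⟩ := exists_pos_mul_lt hδ |B|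
  obtain ⟨f, hf, hfs, hfg⟩ := exists_contDiff_dist_le_dist_fderiv_le hgs hg (lt_min hδ hη)
  have hfs_δ : support f ⊆ thickening δ (support g) :=
    hfs.trans (thickening_mono (min_le_left _ _) _)
  have hf' : Differentiable ℝ f := hf.differentiable (by simp)
  have hg' : Differentiable ℝ g := hg.differentiable one_ne_zero
  have htsupport : tsupport (fun y => f y - g y) ⊆ K := by
    refine closure_minimal ((support_sub f g).trans (Set.union_subset ?_ ?_)) isClosed_cthickening
    · exact hfs_δ.trans ((thickening_subset_of_subset _ subset_closure).trans
        (thickening_subset_cthickening _ _))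
    · exact subset_closure.trans (self_subset_cthickening _)
  refine ⟨f, hf, hfs_δ, fun x => ?_⟩
  refine (norm_smul_le_and_norm_fderiv_smul_le (abs_nonneg B) (hw.differentiable one_ne_zero)
    (hf'.sub hg') (fun y hy => ?_) (fun y => ?_) x).imp (·.trans hBη.le) (·.trans hBη.le)
  · exact (le_abs_self _).trans ((hB y (htsupport hy)).trans (le_abs_self B))
  · rw [fderiv_sub (hf' y) (hg' y), Pi.sub_apply, ← dist_eq_norm, ← dist_eq_norm]
    exact (hfg y).imp (·.trans (min_le_right _ _)) (·.trans (min_le_right _ _))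

theorem exists_contDiff_div_dist_le_dist_fderiv_le [FiniteDimensional ℝ E] {c ψ : E → ℝ} {δ : ℝ}
    (hc : ContDiff ℝ 1 c) (hc_ne : ∀ x, c x ≠ 0) (hψs : HasCompactSupport ψ)
    (hψ : ContDiff ℝ 1 ψ) (hδ : 0 < δ) :
    ∃ f : E → ℝ, ContDiff ℝ ∞ f ∧ support f ⊆ thickening δ (support ψ) ∧
      ∀ x, dist (f x / c x) (ψ x) ≤ δ ∧
        dist (fderiv ℝ (fun y => f y / c y) x) (fderiv ℝ ψ x) ≤ δ := by
  obtain ⟨f, hf, hfs, hfψ⟩ := exists_contDiff_norm_smul_sub_le (hc.inv hc_ne)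
    (hψs.mul_left (f := c)) (hc.mul hψ) hδ
  have hquot (x : E) : c⁻¹ x • (f x - (c * ψ) x) = f x / c x - ψ x := by
    have := hc_ne x
    simp only [Pi.inv_apply, Pi.mul_apply, smul_eq_mul]
    field_simp
  simp only [hquot] at hfψ
  refine ⟨f, hf, hfs.trans (thickening_subset_of_subset _ (support_mul_subset_right _ _)),
    fun x => ?_⟩
  have hfc : ContDiff ℝ 1 fun y => f y / c y := (hf.of_le (by simp)).div hc hc_ne
  rw [dist_eq_norm, dist_eq_norm, ← fderiv_fun_sub (hfc.differentiable one_ne_zero x)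
    (hψ.differentiable one_ne_zero x)]
  exact hfψ x

theorem exists_forall_norm_fderiv_contDiffBump_le (E : Type*) [NormedAddCommGroup E]
    [NormedSpace ℝ E] [FiniteDimensional ℝ E] {q : ℝ} (hq : 1 < q) :
    ∃ L, ∀ (x₀ : E) (φ : ContDiffBump x₀), φ.rOut / φ.rIn = q →
      ∀ x, ‖fderiv ℝ φ x‖ ≤ L / φ.rIn := by
  let χ : ContDiffBump (0 : E) := ⟨1, q, one_pos, hq⟩
  obtain ⟨L, hL⟩ := (χ.hasCompactSupport.fderiv ℝ).exists_bound_of_continuous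
    (χ.contDiff.continuous_fderiv (n := 1) one_ne_zero)
  refine ⟨L, fun x₀ φ hφ x => ?_⟩
  have hφχ : φ = fun y => χ (φ.rIn⁻¹ • (y - x₀)) := by
    ext y; simp [ContDiffBump.apply, hφ, χ]
  rw [hφχ, fderiv_comp_sub (f := fun y => χ (φ.rIn⁻¹ • y)), fderiv_comp_smul, norm_smul,
    norm_inv, Real.norm_of_nonneg φ.rIn_pos.le, ← div_eq_inv_mul]
  exact div_le_div_of_nonneg_right (hL _) φ.rIn_pos.le

theorem exists_contDiff_norm_fderiv_div_le [FiniteDimensional ℝ E] {c : E → ℝ} {C₀ s : ℝ}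
    (hC₀ : 0 < C₀) (hc : ContDiff ℝ 1 c) (hc_lb : ∀ x, C₀ ≤ c x) (hs : 0 < s) :
    ∃ R : ℝ, 0 < R ∧ ∀ x₀ : E, ∃ f : E → ℝ, ContDiff ℝ ∞ f ∧
      support f ⊆ closedBall x₀ (3 * R) ∧ (∀ x ∈ closedBall x₀ R, C₀ / 2 ≤ f x) ∧
      ∀ x, ‖fderiv ℝ (fun y => f y / c y) x‖ ≤ s := by
  obtain ⟨L, hL⟩ := exists_forall_norm_fderiv_contDiffBump_le E one_lt_two
  obtain ⟨t, ht, hLt⟩ := exists_pos_mul_lt (half_pos hs) L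
  refine ⟨t⁻¹, inv_pos.2 ht, fun x₀ => ?_⟩
  let ψ : ContDiffBump x₀ :=
    ⟨t⁻¹, 2 * t⁻¹, inv_pos.2 ht, lt_mul_of_one_lt_left (inv_pos.2 ht) one_lt_two⟩
  have hψ_fderiv (x : E) : ‖fderiv ℝ ψ x‖ ≤ s / 2 :=
    calc ‖fderiv ℝ ψ x‖ ≤ L / t⁻¹ := hL x₀ ψ (mul_div_cancel_right₀ _ (inv_pos.2 ht).ne') x
      _ ≤ s / 2 := by rw [div_inv_eq_mul]; exact hLt.le
  have hc_pos (x : E) : 0 < c x := hC₀.trans_le (hc_lb x)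
  have hδ : 0 < min t⁻¹ (min (1 / 2) (s / 2)) := by positivity
  obtain ⟨f, hf, hfs, hfψ⟩ := exists_contDiff_div_dist_le_dist_fderiv_le hc
    (fun x => (hc_pos x).ne') ψ.hasCompactSupport ψ.contDiff hδ
  simp only [le_min_iff] at hfψ
  refine ⟨f, hf, fun x hx => ?_, fun x hx => ?_, fun x => ?_⟩
  · obtain ⟨y, hy, hxy⟩ := mem_thickening_iff.1 (hfs hx)
    rw [ψ.support_eq, mem_ball] at hy
    rw [mem_closedBall]
    linarith [dist_triangle x y x₀, hxy.trans_le (min_le_left _ _)]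
  · obtain ⟨⟨-, hdist, -⟩, -⟩ := hfψ x
    rw [ψ.one_of_mem_closedBall hx, Real.dist_eq] at hdist
    have hhalf : 1 / 2 ≤ f x / c x := by linarith [(abs_le.1 hdist).1]
    rw [le_div_iff₀ (hc_pos x)] at hhalf
    linarith [hc_lb x]
  · obtain ⟨-, -, -, hdist⟩ := hfψ x
    rw [dist_comm, dist_eq_norm] at hdist
    linarith [norm_le_norm_add_norm_sub (fderiv ℝ ψ x) (fderiv ℝ (fun y => f y / c y) x),
      hψ_fderiv x]

end SmoothApproximation

theorem exists_forall_mem_closedBall_of_eventually_cocompact {X : Type*} [PseudoMetricSpace X]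
    [ProperSpace X] [NoncompactSpace X] {p : X → Prop} (hp : ∀ᶠ x in cocompact X, p x) (r : ℝ) :
    ∃ x₀, ∀ x ∈ closedBall x₀ r, p x := by
  obtain ⟨K, hK, hKp⟩ := mem_cocompact.1 hp
  obtain ⟨x₀, hx₀⟩ := (Set.ne_univ_iff_exists_notMem _).1 (hK.cthickening (r := r)).ne_univ
  exact ⟨x₀, fun x hx => hKp fun hxK => hx₀ <|
    mem_cthickening_of_dist_le _ _ _ _ hxK (mem_closedBall'.1 hx)⟩

theorem sq_mul_le_sq_mul_of_support_subset {X : Type*} {m f : X → ℝ} {K : Set X} {s : ℝ}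
    (hfK : support f ⊆ K) (hm : ∀ x ∈ K, |m x| ≤ s) (x : X) :
    m x ^ 2 * f x ^ 2 ≤ s ^ 2 * f x ^ 2 := by
  by_cases hx : f x = 0
  · simp [hx]
  · exact mul_le_mul_of_nonneg_right (sq_le_sq.2 ((hm x (hfK hx)).trans (le_abs_self s)))
      (sq_nonneg _)

theorem integrable_sq_mul_sq {X : Type*} [MeasurableSpace X] {ν : Measure X} {m f : X → ℝ}
    {K : Set X} {s : ℝ} (hm_meas : Measurable m) (hf : Integrable (fun x => f x ^ 2) ν)
    (hfK : support f ⊆ K) (hm : ∀ x ∈ K, |m x| ≤ s) :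
    Integrable (fun x => m x ^ 2 * f x ^ 2) ν := by
  refine (hf.const_mul (s ^ 2)).mono' ((hm_meas.pow_const 2).aestronglyMeasurable.mul
    hf.aestronglyMeasurable) (Eventually.of_forall fun x => ?_)
  rw [Real.norm_of_nonneg (by positivity)]
  exact sq_mul_le_sq_mul_of_support_subset hfK hm x

theorem sq_mul_measureReal_le_integral_sq {X : Type*} [MeasurableSpace X] {ν : Measure X}
    {f : X → ℝ} {S : Set X} {b : ℝ} (hb : 0 ≤ b) (hS : MeasurableSet S) (hνS : ν S ≠ ⊤)
    (hf : Integrable (fun x => f x ^ 2) ν) (hbf : ∀ x ∈ S, b ≤ f x) :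
    b ^ 2 * ν.real S ≤ ∫ x, f x ^ 2 ∂ν :=
  (setIntegral_ge_of_const_le_real hS hνS (fun x hx => pow_le_pow_left₀ hb (hbf x hx) 2)
    hf.integrableOn).trans
    (setIntegral_le_integral hf (Eventually.of_forall fun x => sq_nonneg (f x)))

theorem measureReal_closedBall_mul {E : Type*} [NormedAddCommGroup E] [NormedSpace ℝ E]
    [FiniteDimensional ℝ E] [MeasurableSpace E] [BorelSpace E] (μ : Measure E)
    [μ.IsAddHaarMeasure] (x : E) {k r : ℝ} (hk : 0 ≤ k) (hr : 0 ≤ r) :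
    μ.real (closedBall x (k * r)) = k ^ Module.finrank ℝ E * μ.real (closedBall x r) := by
  rw [Measure.addHaar_real_closedBall μ x (mul_nonneg hk hr),
    Measure.addHaar_real_closedBall μ x hr, mul_pow, mul_assoc]

theorem nonneg_of_forall_abs_inner_clm_le {E : Type*} [NormedAddCommGroup E]
    [InnerProductSpace ℝ E] [Nontrivial E] {T : E →L[ℝ] E} {Λ : ℝ}
    (hT : ∀ ξ, |⟪ξ, T ξ⟫_ℝ| ≤ Λ * ‖ξ‖ ^ 2) : 0 ≤ Λ := by
  obtain ⟨ξ, hξ⟩ := exists_ne (0 : E)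
  exact nonneg_of_mul_nonneg_left ((abs_nonneg _).trans (hT ξ)) (by positivity)

section Energy

variable {E : Type*} [NormedAddCommGroup E] [InnerProductSpace ℝ E] [CompleteSpace E]

/-- The density of the quadratic form of `h = -c⁻¹ ∇ · A ∇ c⁻¹ + m²` on a function `f`; its
integral is the energy of `f`. The coefficient matrix is encoded as a field of operators `A`. -/
noncomputable def energyDensity (A : E → E →L[ℝ] E) (c m f : E → ℝ) (x : E) : ℝ :=
  ⟪gradient (fun y => f y / c y) x, A x (gradient (fun y => f y / c y) x)⟫_ℝ +
    m x ^ 2 * f x ^ 2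

theorem norm_gradient_eq_norm_fderiv (f : E → ℝ) (x : E) : ‖gradient f x‖ = ‖fderiv ℝ f x‖ :=
  LinearIsometryEquiv.norm_map _ _

theorem gradient_const_mul_fun (k : ℝ) (f : E → ℝ) (x : E) :
    gradient (fun y => k * f y) x = k • gradient f x := by
  apply (InnerProductSpace.toDual ℝ E).injective
  have hfderiv := congrFun (fderiv_const_smul_field (𝕜 := ℝ) (f := f) k) x
  rw [map_smul, toDual_gradient, toDual_gradient]
  exact hfderiv

theorem energyDensity_const_mul (A : E → E →L[ℝ] E) (c m f : E → ℝ) (k : ℝ) (x : E) :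
    energyDensity A c m (fun y => k * f y) x = k ^ 2 * energyDensity A c m f x := by
  simp only [energyDensity, mul_div_assoc, gradient_const_mul_fun, map_smul, inner_smul_left,
    inner_smul_right, conj_trivial]
  ring

theorem integral_inner_clm_gradient_le [MeasurableSpace E] {μ : Measure E} {A : E → E →L[ℝ] E}
    {Λ : ℝ} {u : E → ℝ} {K : Set E} {s : ℝ} (hΛ : 0 ≤ Λ)
    (hA : ∀ x ξ, |⟪ξ, A x ξ⟫_ℝ| ≤ Λ * ‖ξ‖ ^ 2) (hK : IsClosed K) (hμK : μ K < ⊤)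
    (huK : support u ⊆ K) (hus : ∀ x, ‖gradient u x‖ ≤ s) :
    ∫ x, ⟪gradient u x, A x (gradient u x)⟫_ℝ ∂μ ≤ Λ * s ^ 2 * μ.real K := by
  have hzero (x : E) (hx : x ∉ K) : gradient u x = 0 := by
    have htsupport : x ∉ tsupport u := fun h => hx (closure_minimal huK hK h)
    rw [← norm_eq_zero, norm_gradient_eq_norm_fderiv, norm_eq_zero]
    exact notMem_support.1 fun h => htsupport (support_fderiv_subset ℝ h)
  rw [← setIntegral_eq_integral_of_forall_compl_eq_zero (s := K)
    fun x hx => by rw [hzero x hx, inner_zero_left]]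
  refine (Real.le_norm_self _).trans (norm_setIntegral_le_of_norm_le_const hμK fun x _ => ?_)
  calc |⟪gradient u x, A x (gradient u x)⟫_ℝ| ≤ Λ * ‖gradient u x‖ ^ 2 := hA x _
    _ ≤ Λ * s ^ 2 := by gcongr; exact hus x

end Energy

section EnergyInfimum

variable {E : Type*} [NormedAddCommGroup E] [InnerProductSpace ℝ E] [FiniteDimensional ℝ E]
  [MeasurableSpace E] [BorelSpace E] {A : E → E →L[ℝ] E} {Λ : ℝ}

theorem integrable_inner_clm_gradient {μ : Measure E} [IsFiniteMeasureOnCompacts μ] {u : E → ℝ}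
    (hA_meas : Measurable A) (hA : ∀ x ξ, |⟪ξ, A x ξ⟫_ℝ| ≤ Λ * ‖ξ‖ ^ 2) (hu : ContDiff ℝ 1 u)
    (hus : HasCompactSupport u) :
    Integrable (fun x => ⟪gradient u x, A x (gradient u x)⟫_ℝ) μ := by
  have hgrad : Continuous (gradient u) :=
    (InnerProductSpace.toDual ℝ E).symm.continuous.comp (hu.continuous_fderiv one_ne_zero)
  have hgrads : HasCompactSupport (gradient u) :=
    (hus.fderiv ℝ).comp_left (g := (InnerProductSpace.toDual ℝ E).symm) (map_zero _)
  have hmeas : Measurable fun x => A x (gradient u x) :=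
    Continuous.measurable2 (c := fun (T : E →L[ℝ] E) ξ => T ξ) (by fun_prop) hA_meas
      hgrad.measurable
  have hsq : Integrable (fun x => ‖gradient u x‖ ^ 2) μ :=
    MemLp.integrable_norm_pow (p := 2) (hgrad.memLp_of_hasCompactSupport hgrads) two_ne_zero
  exact (hsq.const_mul Λ).mono' (hgrad.measurable.inner hmeas).aestronglyMeasurable
    (Eventually.of_forall fun x => hA x (gradient u x))

theorem energyDensity_integrable_and_integral_le {μ : Measure E}
    [IsFiniteMeasureOnCompacts μ] {c m f : E → ℝ} {K : Set E} {s : ℝ} (hΛ : 0 ≤ Λ)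
    (hA_meas : Measurable A) (hA : ∀ x ξ, |⟪ξ, A x ξ⟫_ℝ| ≤ Λ * ‖ξ‖ ^ 2) (hK : IsCompact K)
    (hc : ContDiff ℝ 1 c) (hc_ne : ∀ x, c x ≠ 0) (hm_meas : Measurable m) (hm : ∀ x ∈ K, |m x| ≤ s)
    (hf : ContDiff ℝ 1 f) (hfK : support f ⊆ K)
    (hfs : ∀ x, ‖fderiv ℝ (fun y => f y / c y) x‖ ≤ s) :
    Integrable (energyDensity A c m f) μ ∧
      ∫ x, energyDensity A c m f x ∂μ ≤ Λ * s ^ 2 * μ.real K + s ^ 2 * ∫ x, f x ^ 2 ∂μ := by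
  have hfcK : support (fun y => f y / c y) ⊆ K := by
    rw [support_div]
    exact Set.inter_subset_left.trans hfK
  have hgrad : Integrable (fun x => ⟪gradient (fun y => f y / c y) x,
      A x (gradient (fun y => f y / c y) x)⟫_ℝ) μ :=
    integrable_inner_clm_gradient hA_meas hA (hf.div hc hc_ne)
      (HasCompactSupport.of_support_subset_isCompact hK hfcK)
  have hf_sq : Integrable (fun x => f x ^ 2) μ :=
    (hf.continuous.memLp_of_hasCompactSupport
      (HasCompactSupport.of_support_subset_isCompact hK hfK)).integrable_sq
  have hmass : Integrable (fun x => m x ^ 2 * f x ^ 2) μ :=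
    integrable_sq_mul_sq hm_meas hf_sq hfK hm
  refine ⟨hgrad.add hmass, (integral_add hgrad hmass).trans_le (add_le_add ?_ ?_)⟩
  · exact integral_inner_clm_gradient_le hΛ hA hK.isClosed hK.measure_lt_top hfcK fun x =>
      (norm_gradient_eq_norm_fderiv _ x).trans_le (hfs x)
  · rw [← integral_const_mul]
    exact integral_mono hmass (hf_sq.const_mul _) (sq_mul_le_sq_mul_of_support_subset hfK hm)

variable [Nontrivial E] {c m : E → ℝ} {C₀ ε : ℝ}

theorem exists_integral_energyDensity_lt_mul_integral_sq (μ : Measure E) [μ.IsAddHaarMeasure]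
    (hC₀ : 0 < C₀) (hA_meas : Measurable A)
    (hA : ∀ x ξ, |⟪ξ, A x ξ⟫_ℝ| ≤ Λ * ‖ξ‖ ^ 2) (hc : ContDiff ℝ 1 c) (hc_lb : ∀ x, C₀ ≤ c x)
    (hm_meas : Measurable m) (hm_zero : Tendsto m (cocompact E) (nhds 0)) (hε : 0 < ε) :
    ∃ f : E → ℝ, ContDiff ℝ ∞ f ∧ HasCompactSupport f ∧ 0 < ∫ x, f x ^ 2 ∂μ ∧
      Integrable (energyDensity A c m f) μ ∧
      ∫ x, energyDensity A c m f x ∂μ < ε * ∫ x, f x ^ 2 ∂μ := by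
  have hΛ : 0 ≤ Λ := nonneg_of_forall_abs_inner_clm_le (hA 0)
  have := NormedSpace.noncompactSpace ℝ E
  set D : ℝ := 3 ^ Module.finrank ℝ E / (C₀ / 2) ^ 2
  obtain ⟨t, ht, htε⟩ := exists_pos_mul_lt hε (Λ * D + 1)
  have hs : 0 < √t := Real.sqrt_pos.2 ht
  obtain ⟨R, hR, hcutoff⟩ := exists_contDiff_norm_fderiv_div_le hC₀ hc hc_lb hs
  have hm_small : ∀ᶠ x in cocompact E, |m x| ≤ √t := by
    simpa using hm_zero.abs.eventually_le_const (by simpa using hs)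
  obtain ⟨x₀, hx₀⟩ := exists_forall_mem_closedBall_of_eventually_cocompact hm_small (3 * R)
  obtain ⟨f, hf, hfK, hf_lb, hf_fderiv⟩ := hcutoff x₀
  have hfs : HasCompactSupport f := .of_support_subset_isCompact (isCompact_closedBall _ _) hfK
  obtain ⟨hint, henergy⟩ := energyDensity_integrable_and_integral_le (μ := μ) hΛ hA_meas hA
    (isCompact_closedBall _ _) hc (fun x => (hC₀.trans_le (hc_lb x)).ne') hm_meas hx₀
    (hf.of_le (by simp)) hfK hf_fderiv
  have hmass : (C₀ / 2) ^ 2 * μ.real (closedBall x₀ R) ≤ ∫ x, f x ^ 2 ∂μ :=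
    sq_mul_measureReal_le_integral_sq (half_pos hC₀).le measurableSet_closedBall
      measure_closedBall_lt_top.ne
      (hf.continuous.memLp_of_hasCompactSupport hfs).integrable_sq hf_lb
  have hball : 0 < μ.real (closedBall x₀ R) :=
    ENNReal.toReal_pos (measure_closedBall_pos μ x₀ hR).ne' measure_closedBall_lt_top.ne
  have hpos : 0 < ∫ x, f x ^ 2 ∂μ := lt_of_lt_of_le (by positivity) hmass
  have hvolume : μ.real (closedBall x₀ (3 * R)) ≤ D * ∫ x, f x ^ 2 ∂μ := by
    rw [measureReal_closedBall_mul μ x₀ zero_le_three hR.le, div_mul_eq_mul_div,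
      le_div_iff₀ (by positivity), mul_assoc, mul_comm (μ.real _)]
    gcongr
  refine ⟨f, hf, hfs, hpos, hint, ?_⟩
  calc ∫ x, energyDensity A c m f x ∂μ
      ≤ Λ * t * μ.real (closedBall x₀ (3 * R)) + t * ∫ x, f x ^ 2 ∂μ := by
        rwa [Real.sq_sqrt ht.le] at henergy
    _ ≤ Λ * t * (D * ∫ x, f x ^ 2 ∂μ) + t * ∫ x, f x ^ 2 ∂μ := by gcongr
    _ = (Λ * D + 1) * t * ∫ x, f x ^ 2 ∂μ := by ring
    _ < ε * ∫ x, f x ^ 2 ∂μ := by gcongr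

theorem energy_form_inf_zero_massless_general (μ : Measure E) [μ.IsAddHaarMeasure]
    (hC₀ : 0 < C₀) (hA_meas : Measurable A)
    (hA : ∀ x ξ, |⟪ξ, A x ξ⟫_ℝ| ≤ Λ * ‖ξ‖ ^ 2) (hc : ContDiff ℝ 1 c) (hc_lb : ∀ x, C₀ ≤ c x)
    (hm_meas : Measurable m) (hm_zero : Tendsto m (cocompact E) (nhds 0)) (hε : 0 < ε) :
    ∃ f : E → ℝ, ContDiff ℝ ∞ f ∧ HasCompactSupport f ∧ ∫ x, f x ^ 2 ∂μ = 1 ∧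
      Integrable (energyDensity A c m f) μ ∧ ∫ x, energyDensity A c m f x ∂μ < ε := by
  obtain ⟨f, hf, hfs, hpos, hint, hlt⟩ := exists_integral_energyDensity_lt_mul_integral_sq μ
    hC₀ hA_meas hA hc hc_lb hm_meas hm_zero hε
  set I := ∫ x, f x ^ 2 ∂μ
  have hk : (√I)⁻¹ ^ 2 = I⁻¹ := by rw [inv_pow, Real.sq_sqrt hpos.le]
  have hdensity : energyDensity A c m (fun y => (√I)⁻¹ * f y) =
      fun x => I⁻¹ * energyDensity A c m f x := by
    ext x
    rw [energyDensity_const_mul, hk]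
  refine ⟨fun y => (√I)⁻¹ * f y, contDiff_const.mul hf, hfs.mul_left, ?_, ?_, ?_⟩
  · simp only [mul_pow, integral_const_mul, hk]
    exact inv_mul_cancel₀ hpos.ne'
  · rw [hdensity]
    exact hint.const_mul _
  · rw [hdensity, integral_const_mul, inv_mul_lt_iff₀ hpos, mul_comm]
    exact hlt

end EnergyInfimum

theorem qform_eq_inner_toEuclideanCLM
    (M : EuclideanSpace ℝ (Fin 3) → Matrix (Fin 3) (Fin 3) ℝ) (x ξ : EuclideanSpace ℝ (Fin 3)) :
    qform M x ξ = ⟪ξ, Matrix.toEuclideanCLM (𝕜 := ℝ) (M x) ξ⟫_ℝ := by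
  simp only [qform, Matrix.inner_toEuclideanCLM, dotProduct, Matrix.mulVec, Finset.mul_sum,
    mul_assoc]

theorem measurable_toEuclideanCLM {X n : Type*} [MeasurableSpace X] [Fintype n] [DecidableEq n]
    {a : X → Matrix n n ℝ} (ha : ∀ i j, Measurable fun x => a x i j) :
    Measurable fun x => Matrix.toEuclideanCLM (𝕜 := ℝ) (a x) := by
  have hsum (M : Matrix n n ℝ) : Matrix.toEuclideanCLM (𝕜 := ℝ) M =
      ∑ i, ∑ j, M i j • Matrix.toEuclideanCLM (𝕜 := ℝ) (Matrix.single i j 1) := by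
    conv_lhs => rw [Matrix.matrix_eq_sum_single M]
    simp only [map_sum]
    refine Finset.sum_congr rfl fun i _ => Finset.sum_congr rfl fun j _ => ?_
    rw [← map_smul, Matrix.smul_single, smul_eq_mul, mul_one]
  rw [funext fun x => hsum (a x)]
  exact Finset.measurable_sum _ fun i _ => Finset.measurable_sum _ fun j _ =>
    (ha i j).smul_const _

theorem abs_inner_toEuclideanCLM_le {a : EuclideanSpace ℝ (Fin 3) → Matrix (Fin 3) (Fin 3) ℝ}
    {x ξ : EuclideanSpace ℝ (Fin 3)} {Λ : ℝ} (h_nonneg : 0 ≤ qform a x ξ)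
    (h_le : qform a x ξ ≤ Λ * ‖ξ‖ ^ 2) :
    |⟪ξ, Matrix.toEuclideanCLM (𝕜 := ℝ) (a x) ξ⟫_ℝ| ≤ Λ * ‖ξ‖ ^ 2 := by
  rwa [← qform_eq_inner_toEuclideanCLM, abs_of_nonneg h_nonneg]

/-- Vanishing of the bottom of the energy form in the massless case (claim 2 of
Subsection 1.3): if the variable boson mass `m(x)` tends to `0` at infinity, then
for every `ε > 0` there is a normalized smooth compactly supported `f` with
`∫ ⟨∇(f/c), a ∇(f/c)⟩ + m² f² dx < ε`; i.e. `inf σ(h) = 0`. -/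
theorem energy_form_inf_zero_massless
    (a : EuclideanSpace ℝ (Fin 3) → Matrix (Fin 3) (Fin 3) ℝ)
    (c m : EuclideanSpace ℝ (Fin 3) → ℝ)
    (C₀ C₁ : ℝ) (hC₀ : 0 < C₀) (hC₀₁ : C₀ ≤ C₁)
    (ha_symm : ∀ x, (a x).IsSymm)
    (ha_meas : ∀ i j, Measurable fun x => a x i j)
    (ha_ell : ∀ x ξ : EuclideanSpace ℝ (Fin 3),
      C₀ * ‖ξ‖ ^ 2 ≤ qform a x ξ ∧ qform a x ξ ≤ C₁ * ‖ξ‖ ^ 2)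
    (hc : ContDiff ℝ 1 c) (hc_bd : ∀ x, C₀ ≤ c x ∧ c x ≤ C₁)
    (hc_grad : ∃ M : ℝ, ∀ x, ‖gradient c x‖ ≤ M)
    (hm_meas : Measurable m) (hm_bd : ∃ M : ℝ, ∀ x, |m x| ≤ M)
    (hm_zero : Tendsto m (cocompact (EuclideanSpace ℝ (Fin 3))) (nhds 0)) :
    ∀ ε : ℝ, 0 < ε →
      ∃ f : EuclideanSpace ℝ (Fin 3) → ℝ,
        ContDiff ℝ (⊤ : ℕ∞) f ∧ HasCompactSupport f ∧
        (∫ x, (f x) ^ 2) = 1 ∧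
        (∫ x, qform a x (gradient (fun y => f y / c y) x) + (m x) ^ 2 * (f x) ^ 2) < ε := by
  intro ε hε
  obtain ⟨f, hf, hfs, hf_one, -, hlt⟩ := energy_form_inf_zero_massless_general volume hC₀
    (measurable_toEuclideanCLM ha_meas)
    (fun x ξ => abs_inner_toEuclideanCLM_le (le_trans (by positivity) (ha_ell x ξ).1)
      (ha_ell x ξ).2)
    hc (fun x => (hc_bd x).1) hm_meas hm_zero hε
  refine ⟨f, hf, hfs, hf_one, ?_⟩
  simpa only [energyDensity, qform_eq_inner_toEuclideanCLM] using hlt
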